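/- Assume the feedback is corrupted in at most C rounds and that C is known to the seller. Then the meta-algorithm with Commit procedure CommitKnown guarantees regret R_T ≤ 5 log₂ T + 19 C + 3, and in particular R_T ≤ O(C + log T). -/

import Mathlib

/-!
Amortised analysis. Let `F d` (`pathIdx`) be the index of the depth-`d` dyadic interval containing
`v`. A search step without corruption takes at most three rounds and moves the current node one edge
closer to the correct leaf in the dyadic tree; a step with a corruption moves it at most one edge
away. At the correct leaf, posting `L` costs at most the leaf width `2⁻ᴰ ≤ 1/T`, and `R` is posted
there in at most `C + 1` iterations that do not fail. At a wrong leaf, each iteration that does not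
fail contains a corruption, so its counter never exceeds `C` (`ctr_step`, `ctr_le_corruptions`) and
the algorithm never commits to it.

These facts are combined in the potential `phi`, which is three times the tree distance to the
correct leaf, plus the number of increments left at the correct leaf, plus a correction `adj`
recording the progress or the damage already done inside the current search step. By `phi_step` each
round costs at most the drop of the potential, plus `7` if the round is corrupted, plus the leaf
width. As the potential is nonnegative and starts at `3 D + C + 1`, the regret is at most
`(3 D + C + 1) + 7 C + T 2⁻ᴰ ≤ 3 D + 8 C + 2`.
-/

namespace RobustPricing

/-- Phase of the current search step: first endpoint query, second endpoint query,
or midpoint query. -/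
inductive Ph | checkL | checkR | mid
deriving DecidableEq

/-- Parent of a node `(d, k)` (representing the dyadic interval `[k/2^d, (k+1)/2^d)`). -/
def parent (p : ℕ × ℕ) : ℕ × ℕ := (p.1 - 1, p.2 / 2)

/-- Left child of a dyadic node. -/
def leftChild (p : ℕ × ℕ) : ℕ × ℕ := (p.1 + 1, 2 * p.2)

/-- Right child of a dyadic node. -/
def rightChild (p : ℕ × ℕ) : ℕ × ℕ := (p.1 + 1, 2 * p.2 + 1)

/-- Left endpoint `L` of the dyadic interval of a node. -/
noncomputable def nodeL (p : ℕ × ℕ) : ℝ := (p.2 : ℝ) / 2 ^ p.1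

/-- Right endpoint `R` of the dyadic interval of a node. -/
noncomputable def nodeR (p : ℕ × ℕ) : ℝ := ((p.2 : ℝ) + 1) / 2 ^ p.1

/-- Midpoint `M = (L+R)/2` of the dyadic interval of a node. -/
noncomputable def nodeM (p : ℕ × ℕ) : ℝ := (2 * (p.2 : ℝ) + 1) / 2 ^ (p.1 + 1)

/-- The leaf `ℓ* = (D, ⌊v·2^D⌋)` at depth `D` containing the valuation `v`. -/
noncomputable def lstar (v : ℝ) (D : ℕ) : ℕ × ℕ := (D, ⌊v * 2 ^ D⌋₊)

/-- State of the meta-algorithm (Algorithm 1) instantiated with the `CommitKnown`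
procedure: current node `nd` of the dyadic tree, phase `ph` within the current search
step, the feedback `sL` observed at the left endpoint in the current safety check, and
the global (never reset) per-leaf counters `ctr` of `CommitKnown`. -/
structure St where
  nd : ℕ × ℕ
  ph : Ph
  sL : Bool
  ctr : ℕ → ℕ

/-- Initial state: the root interval `[0,1)`. -/
def initSt : St := ⟨(0, 0), Ph.checkL, true, fun _ => 0⟩

/-- Price posted by the meta-algorithm with `CommitKnown` (depth of leaves `D`, known
corruption budget `C`).  At a non-leaf node the safety check posts `L` then `R`, and then
the midpoint `M` is posted; at a leaf `ℓ = [L,R)`, while `s_ℓ ≤ C` the procedure posts `L`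
then `R`, and once `s_ℓ > C` it posts `L` in every round. -/
noncomputable def price (D C : ℕ) (s : St) : ℝ :=
  if s.nd.1 = D then
    if s.ctr s.nd.2 ≤ C ∧ s.ph = Ph.checkR then nodeR s.nd else nodeL s.nd
  else
    match s.ph with
    | Ph.checkL => nodeL s.nd
    | Ph.checkR => nodeR s.nd
    | Ph.mid => nodeM s.nd

/-- One-round transition of the meta-algorithm with `CommitKnown`, given the observed
feedback `b` for the posted price.  At a non-leaf node: if the safety check fails
(`σ_L = 0` or `σ_R = 1`) backtrack to the parent, otherwise query the midpoint and descend
to `[M,R)` on `σ_M = 1` and to `[L,M)` on `σ_M = 0`.  At a leaf `ℓ`: while `s_ℓ ≤ C`, post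
`L` then `R`, return FAIL (backtrack to the parent) if `σ_L = 0` or `σ_R = 1` and
otherwise increment `s_ℓ`; once `s_ℓ > C`, commit to posting `L`. -/
def step (D C : ℕ) (s : St) (b : Bool) : St :=
  if s.nd.1 = D then
    if s.ctr s.nd.2 ≤ C then
      match s.ph with
      | Ph.checkL => ⟨s.nd, Ph.checkR, b, s.ctr⟩
      | _ =>
        if s.sL = false ∨ b = true then ⟨parent s.nd, Ph.checkL, true, s.ctr⟩
        else ⟨s.nd, Ph.checkL, true, Function.update s.ctr s.nd.2 (s.ctr s.nd.2 + 1)⟩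
    else s
  else
    match s.ph with
    | Ph.checkL => ⟨s.nd, Ph.checkR, b, s.ctr⟩
    | Ph.checkR =>
      if s.sL = false ∨ b = true then ⟨parent s.nd, Ph.checkL, true, s.ctr⟩
      else ⟨s.nd, Ph.mid, s.sL, s.ctr⟩
    | Ph.mid => ⟨(if b then rightChild s.nd else leftChild s.nd), Ph.checkL, true, s.ctr⟩

/-- State trajectory of the meta-algorithm with `CommitKnown` under the observed feedback
sequence `obs` (the bit `obs t` is the feedback the seller observes at round `t`). -/
def traj (D C : ℕ) (obs : ℕ → Bool) : ℕ → St
  | 0 => initSt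
  | t + 1 => step D C (traj D C obs t) (obs t)

/-- Price posted at round `t`. -/
noncomputable def priceAt (D C : ℕ) (obs : ℕ → Bool) (t : ℕ) : ℝ :=
  price D C (traj D C obs t)

/-- Number of corrupted rounds among the first `T` rounds: rounds where the observed
feedback differs from the truthful feedback `1{p_t ≤ v}`. -/
noncomputable def corruptions (v : ℝ) (D C T : ℕ) (obs : ℕ → Bool) : ℕ :=
  ((Finset.range T).filter fun t => obs t ≠ decide (priceAt D C obs t ≤ v)).card

/-- `N_T`: number of Commit calls returning FAIL (backtracking) on the correct leaf `ℓ*`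
during the first `T` rounds. -/
noncomputable def NT (v : ℝ) (D C T : ℕ) (obs : ℕ → Bool) : ℕ :=
  ((Finset.range T).filter fun t =>
      (traj D C obs t).nd = lstar v D ∧ (traj D C obs (t + 1)).nd ≠ lstar v D).card

/-- `N_F`: number of Commit calls returning FAIL (backtracking) on incorrect leaves
during the first `T` rounds. -/
noncomputable def NF (v : ℝ) (D C T : ℕ) (obs : ℕ → Bool) : ℕ :=
  ((Finset.range T).filter fun t =>
      (traj D C obs t).nd.1 = D ∧ (traj D C obs t).nd ≠ lstar v D ∧
        (traj D C obs (t + 1)).nd ≠ (traj D C obs t).nd).card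

/-- `R(ℓ)`: regret accumulated over the rounds `Q(ℓ)` in which the algorithm runs the
Commit subroutine on the leaf `ℓ`, i.e. `Σ_{t ∈ Q(ℓ)} (v − p_t·1{p_t ≤ v})`. -/
noncomputable def Rleaf (v : ℝ) (D C T : ℕ) (obs : ℕ → Bool) (l : ℕ × ℕ) : ℝ :=
  ∑ t ∈ (Finset.range T).filter (fun t => (traj D C obs t).nd = l),
    (v - priceAt D C obs t * (if priceAt D C obs t ≤ v then 1 else 0))

/-- Cumulative regret over the horizon `T`: `R_T = T·v − Σ_{t<T} p_t·1{p_t ≤ v}`. -/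
noncomputable def regret (v : ℝ) (D C T : ℕ) (obs : ℕ → Bool) : ℝ :=
  (T : ℝ) * v - ∑ t ∈ Finset.range T,
    priceAt D C obs t * (if priceAt D C obs t ≤ v then 1 else 0)

/-! ### The path to the valuation -/

/-- Index of the dyadic interval of depth `d` that contains `v`. -/
noncomputable def pathIdx (v : ℝ) (d : ℕ) : ℕ := ⌊v * 2 ^ d⌋₊

lemma pathIdx_succ (v : ℝ) (d : ℕ) : pathIdx v (d + 1) / 2 = pathIdx v d := by
  unfold pathIdx
  rw [← Nat.floor_div_ofNat, pow_succ, ← mul_assoc]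
  congr 1
  simp

lemma pathIdx_zero {v : ℝ} (hv1 : v < 1) : pathIdx v 0 = 0 := by
  simp [pathIdx, Nat.floor_eq_zero, hv1]

/-- Every price of the algorithm is a dyadic fraction, so truthful feedback is a comparison
of natural numbers. -/
lemma dyadic_le_iff {v : ℝ} (hv : 0 ≤ v) (k d : ℕ) :
    (k : ℝ) / 2 ^ d ≤ v ↔ k ≤ pathIdx v d := by
  unfold pathIdx
  rw [Nat.le_floor_iff (by positivity), div_le_iff₀ (by positivity)]

lemma nodeL_le_iff {v : ℝ} (hv : 0 ≤ v) (p : ℕ × ℕ) :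
    nodeL p ≤ v ↔ p.2 ≤ pathIdx v p.1 := dyadic_le_iff hv _ _

lemma nodeR_le_iff {v : ℝ} (hv : 0 ≤ v) (p : ℕ × ℕ) :
    nodeR p ≤ v ↔ p.2 + 1 ≤ pathIdx v p.1 := by
  rw [← dyadic_le_iff hv]; simp [nodeR]

lemma nodeM_le_iff {v : ℝ} (hv : 0 ≤ v) (p : ℕ × ℕ) :
    nodeM p ≤ v ↔ 2 * p.2 + 1 ≤ pathIdx v (p.1 + 1) := by
  rw [← dyadic_le_iff hv]; simp [nodeM]

/-- Distance in the dyadic tree from the node `(d, k)` to the leaf of depth `D` containing the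
valuation, where `F d` is the index of the depth-`d` node on the path to that leaf. -/
def treeDist (F : ℕ → ℕ) (D : ℕ) : ℕ → ℕ → ℤ
  | 0, _ => D
  | d + 1, k => if k = F (d + 1) then (D : ℤ) - (d + 1) else treeDist F D d (k / 2) + 1

lemma treeDist_on (F : ℕ → ℕ) (D d : ℕ) : treeDist F D d (F d) = (D : ℤ) - d := by
  cases d <;> simp [treeDist]

lemma treeDist_ge (F : ℕ → ℕ) (D d k : ℕ) : (D : ℤ) - d ≤ treeDist F D d k := by
  induction d generalizing k with
  | zero => simp [treeDist]
  | succ d ih =>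
    have := ih (k / 2)
    rw [treeDist]; push_cast; split_ifs <;> omega

/-! ### The potential -/

/-- Truthful feedback in state `s`, as a comparison of indices. -/
def truth (F : ℕ → ℕ) (D C : ℕ) (s : St) : Prop :=
  if s.nd.1 = D then
    if s.ctr s.nd.2 ≤ C ∧ s.ph = Ph.checkR then s.nd.2 + 1 ≤ F s.nd.1 else s.nd.2 ≤ F s.nd.1
  else
    match s.ph with
    | Ph.checkL => s.nd.2 ≤ F s.nd.1
    | Ph.checkR => s.nd.2 + 1 ≤ F s.nd.1
    | Ph.mid => 2 * s.nd.2 + 1 ≤ F (s.nd.1 + 1)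

lemma price_le_iff {v : ℝ} (hv : 0 ≤ v) (D C : ℕ) (s : St) :
    price D C s ≤ v ↔ truth (pathIdx v) D C s := by
  rcases s with ⟨nd, ph, sL, ctr⟩
  unfold price truth
  cases ph <;> dsimp only <;> split_ifs <;>
    simp only [nodeL_le_iff hv, nodeR_le_iff hv, nodeM_le_iff hv]

open Classical in
/-- Indicator that the feedback `b` in state `s` is corrupted. -/
noncomputable def corr (F : ℕ → ℕ) (D C : ℕ) (s : St) (b : Bool) : ℕ :=
  if b = true ↔ truth F D C s then 0 else 1

open Classical in
/-- Regret of the round in state `s`, up to the leaf width: `0` when the left endpoint of the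
correct leaf is posted, and `1` otherwise. -/
noncomputable def loss (F : ℕ → ℕ) (D C : ℕ) (s : St) : ℤ :=
  if s.nd.1 = D ∧ s.nd.2 = F D ∧ ¬ (s.ctr s.nd.2 ≤ C ∧ s.ph = Ph.checkR) then 0 else 1

/-- Part of the potential that depends on the phase inside the current search step. It is negative
when the step is on its way to reduce the distance, and positive when a corruption already made
inside the step is going to increase the distance or to waste the step. -/
def adj (F : ℕ → ℕ) (D : ℕ) (s : St) : ℤ :=
  match s.ph with
  | Ph.checkL => 0
  | Ph.checkR =>
    if s.nd.2 = F s.nd.1 then (if s.sL = true then (if s.nd.1 = D then 0 else -1) else 4)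
    else (if s.sL = true ∧ F s.nd.1 < s.nd.2 then 5 else -2)
  | Ph.mid => if s.nd.2 = F s.nd.1 then -2 else 4

/-- The potential: three rounds for each edge between the current node and the correct leaf, one for
each increment of the correct leaf's counter before commitment, plus `adj`. -/
def phi (F : ℕ → ℕ) (D C : ℕ) (s : St) : ℤ :=
  3 * treeDist F D s.nd.1 s.nd.2 + ((C + 1 - s.ctr (F D) : ℕ) : ℤ) + adj F D s

/-- Structural invariant of the reachable states. -/
def Inv (D : ℕ) (s : St) : Prop :=
  s.nd.2 < 2 ^ s.nd.1 ∧ s.nd.1 ≤ D ∧ (s.ph = Ph.mid → s.nd.1 ≠ D)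

lemma parent_lt {d k : ℕ} (h : k < 2 ^ d) : k / 2 < 2 ^ (d - 1) := by
  cases d with
  | zero => simp at h; simp [h]
  | succ d => rw [pow_succ] at h; simp; omega

lemma Inv.step {D C : ℕ} {s : St} (h : Inv D s) (b : Bool) : Inv D (step D C s b) := by
  rcases s with ⟨⟨d, k⟩, ph, sL, ctr⟩
  obtain ⟨h1, h2, h3⟩ := h
  have hp := parent_lt h1
  have hd := pow_succ 2 d
  dsimp only at h1 h2 h3 hp
  unfold RobustPricing.step Inv
  cases ph <;> cases b <;> dsimp only <;> split_ifs <;>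
    simp_all [parent, leftChild, rightChild] <;> omega

lemma phi_nonneg (F : ℕ → ℕ) {D C : ℕ} {s : St} (hF0 : F 0 = 0) (h : Inv D s) :
    0 ≤ phi F D C s := by
  rcases s with ⟨⟨d, k⟩, ph, sL, ctr⟩
  obtain ⟨h1, h2, h3⟩ := h
  dsimp only at h1 h2 h3
  have hge := treeDist_ge F D d k
  have hoff : k ≠ F d → 1 ≤ treeDist F D d k := by
    intro hk
    cases d with
    | zero => simp at h1; omega
    | succ d =>
      have := treeDist_ge F D d (k / 2)
      rw [treeDist, if_neg hk]; omega
  unfold phi adj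
  cases ph <;> dsimp only
  · omega
  · split_ifs <;> omega
  · have := h3 rfl
    split_ifs <;> omega

/-- Amortised cost of a round: its loss is paid by the potential, except that a corruption may cost
up to `7`. The hypothesis `hw` excludes commitment to a wrong leaf. -/
lemma phi_step (F : ℕ → ℕ) {D C : ℕ} {s : St} (hF0 : F 0 = 0) (hF : ∀ d, F (d + 1) / 2 = F d)
    (h : Inv D s) (hw : s.nd.1 = D → s.nd.2 ≠ F D → s.ctr s.nd.2 ≤ C) (b : Bool) :
    phi F D C (step D C s b) + loss F D C s ≤ phi F D C s + 7 * (corr F D C s b : ℤ) := by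
  rcases s with ⟨⟨d, k⟩, ph, sL, ctr⟩
  obtain ⟨h1, h2, h3⟩ := h
  dsimp only at h1 h2 h3 hw
  have hon : k = F d → treeDist F D d k = (D : ℤ) - d := by
    rintro rfl; exact treeDist_on F D d
  have hpar_off : k ≠ F d → treeDist F D (d - 1) (k / 2) = treeDist F D d k - 1 := by
    intro hk
    cases d with
    | zero => simp at h1; omega
    | succ d => rw [treeDist.eq_2, if_neg hk]; simp
  have hpar_on : k = F d → treeDist F D (d - 1) (k / 2) ≤ (D : ℤ) - d + 1 := by
    rintro rfl
    cases d with
    | zero => simp [treeDist]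
    | succ d => simp [hF, treeDist_on]; omega
  have hFd := hF d
  have hl : (2 * k = F (d + 1) → treeDist F D (d + 1) (2 * k) = (D : ℤ) - (d + 1)) ∧
      (2 * k ≠ F (d + 1) → treeDist F D (d + 1) (2 * k) = treeDist F D d k + 1) := by
    rw [treeDist]; constructor <;> intro e <;> simp [e]
  have hr : (2 * k + 1 = F (d + 1) → treeDist F D (d + 1) (2 * k + 1) = (D : ℤ) - (d + 1)) ∧
      (2 * k + 1 ≠ F (d + 1) → treeDist F D (d + 1) (2 * k + 1) = treeDist F D d k + 1) := by
    rw [treeDist, show (2 * k + 1) / 2 = k by omega]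
    constructor <;> intro e <;> simp [e]
  clear hF hF0 h1
  unfold phi loss corr truth RobustPricing.step adj
  by_cases hdD : d = D
  · subst hdD
    clear hl hr
    have hm : ph ≠ Ph.mid := fun e => h3 e rfl
    by_cases hc : ctr k ≤ C
    · by_cases hk : k = F d
      · have hx := hon hk
        have hy := hpar_on hk
        clear hon hpar_on hpar_off hw h3
        subst hk
        cases ph <;> cases b <;> cases sL <;>
          simp [parent, hc] at hm ⊢ <;> omega
      · have hx := hpar_off hk
        have hk' : F d ≠ k := fun e => hk e.symm
        clear hon hpar_on hpar_off hw h3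
        cases ph <;> cases b <;> cases sL <;>
          simp [parent, hc, hk, hk', Function.update_of_ne] at hm ⊢ <;> (try split_ifs) <;> omega
    · have hk : k = F d := by by_contra hk; exact hc (hw rfl hk)
      clear hon hpar_on hpar_off hw h3
      subst hk
      cases b <;> simp [hc]
  · by_cases hk : k = F d
    · have hx := hon hk
      have hy := hpar_on hk
      clear hon hpar_on hpar_off hw h3
      subst hk
      cases ph <;> cases b <;> cases sL <;>
        simp [parent, leftChild, rightChild, hdD] <;> (try split_ifs) <;> omega
    · have hx := hpar_off hk
      clear hon hpar_on hpar_off hw h3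
      cases ph <;> cases b <;> cases sL <;>
        simp [parent, leftChild, rightChild, hdD, hk] <;> (try split_ifs) <;> omega

/-! ### Wrong leaves are never committed to -/

open Classical in
/-- Indicator that the current iteration of `CommitKnown` on the leaf of index `k` has already seen
a corrupted acceptance of its left endpoint. -/
noncomputable def pend (F : ℕ → ℕ) (D k : ℕ) (s : St) : ℕ :=
  if s.nd = (D, k) ∧ s.ph = Ph.checkR ∧ s.sL = true ∧ F D < k then 1 else 0

/-- Every increment of a wrong leaf's counter is charged to a corruption of its own. -/
lemma ctr_step (F : ℕ → ℕ) {D C k : ℕ} {s : St} (h : Inv D s) (hk : k ≠ F D) (b : Bool) :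
    (step D C s b).ctr k + pend F D k (step D C s b) ≤
      s.ctr k + pend F D k s + corr F D C s b := by
  rcases s with ⟨⟨d, j⟩, ph, sL, ctr⟩
  obtain ⟨h1, h2, h3⟩ := h
  dsimp only at h1 h2 h3
  unfold pend corr truth RobustPricing.step
  by_cases hdD : d = D
  · subst hdD
    by_cases hc : ctr j ≤ C
    · by_cases hj : j = k
      · subst hj
        cases ph <;> cases b <;> cases sL <;>
          simp_all [parent] <;> split_ifs <;> omega
      · have hj' : k ≠ j := fun e => hj e.symm
        cases ph <;> cases b <;> cases sL <;>
          simp_all [parent, Function.update_of_ne]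
    · simp [hc]
  · cases ph <;> cases b <;> cases sL <;>
      simp_all [parent, leftChild, rightChild]

/-! ### Summation over the rounds -/

lemma corruptions_succ {v : ℝ} (hv : 0 ≤ v) (D C t : ℕ) (obs : ℕ → Bool) :
    corruptions v D C (t + 1) obs =
      corruptions v D C t obs + corr (pathIdx v) D C (traj D C obs t) (obs t) := by
  unfold corruptions corr
  rw [Finset.card_filter, Finset.card_filter, Finset.sum_range_succ]
  congr 1
  have := price_le_iff hv D C (traj D C obs t)
  unfold priceAt
  by_cases hp : truth (pathIdx v) D C (traj D C obs t) <;> cases obs t <;> simp [hp, this]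

lemma corruptions_mono (v : ℝ) (D C : ℕ) (obs : ℕ → Bool) :
    Monotone fun t => corruptions v D C t obs := by
  intro a b hab
  exact Finset.card_le_card (Finset.filter_subset_filter _ (Finset.range_mono hab))

lemma inv_traj (D C : ℕ) (obs : ℕ → Bool) (t : ℕ) : Inv D (traj D C obs t) := by
  induction t with
  | zero => simp [traj, initSt, Inv]
  | succ t ih => exact ih.step _

lemma ctr_le_corruptions {v : ℝ} (hv : 0 ≤ v) (D C : ℕ) (obs : ℕ → Bool) {k : ℕ}
    (hk : k ≠ pathIdx v D) (t : ℕ) :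
    (traj D C obs t).ctr k + pend (pathIdx v) D k (traj D C obs t) ≤
      corruptions v D C t obs := by
  induction t with
  | zero => simp [traj, initSt, pend]
  | succ t ih =>
    rw [corruptions_succ hv]
    have := ctr_step (C := C) (pathIdx v) (inv_traj D C obs t) hk (obs t)
    simp only [traj]
    omega

lemma sum_loss_le {v : ℝ} (hv : 0 ≤ v) (hv1 : v < 1) (D C T : ℕ) (obs : ℕ → Bool)
    (hC : corruptions v D C T obs ≤ C) (t : ℕ) (ht : t ≤ T) :
    phi (pathIdx v) D C (traj D C obs t) +
        ∑ i ∈ Finset.range t, loss (pathIdx v) D C (traj D C obs i) ≤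
      3 * D + C + 1 + 7 * (corruptions v D C t obs : ℤ) := by
  induction t with
  | zero => simp [traj, initSt, phi, adj, treeDist]; omega
  | succ t ih =>
    have ih := ih (by omega)
    have hw : (traj D C obs t).nd.1 = D → (traj D C obs t).nd.2 ≠ pathIdx v D →
        (traj D C obs t).ctr (traj D C obs t).nd.2 ≤ C := by
      intro _ hk
      have h1 := ctr_le_corruptions hv D C obs hk t
      have h2 := corruptions_mono v D C obs (show t ≤ T by omega)
      dsimp only at h2
      omega
    have := phi_step (pathIdx v) (pathIdx_zero hv1) (pathIdx_succ v) (inv_traj D C obs t) hw (obs t)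
    rw [corruptions_succ hv, Finset.sum_range_succ]
    simp only [traj]
    push_cast
    omega

lemma price_nonneg (D C : ℕ) (s : St) : 0 ≤ price D C s := by
  unfold price nodeL nodeR nodeM
  split_ifs <;> try positivity
  split <;> positivity

lemma round_regret_le {v : ℝ} (hv : 0 ≤ v) (hv1 : v < 1) (D C : ℕ) (s : St) :
    v - price D C s * (if price D C s ≤ v then 1 else 0) ≤
      (loss (pathIdx v) D C s : ℝ) + 1 / 2 ^ D := by
  have hpos : (0 : ℝ) < 1 / 2 ^ D := by positivity
  unfold loss
  split_ifs with h1 h2 h2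
  · obtain ⟨hd, hk, hn⟩ := h2
    have hp : price D C s = nodeL s.nd := by simp [price, hd, hn]
    have hlt : v * 2 ^ D < (s.nd.2 : ℝ) + 1 := by
      rw [hk]; exact Nat.lt_floor_add_one _
    rw [hp, nodeL, hd]
    have h2 : v < ((s.nd.2 : ℝ) + 1) / 2 ^ D := by rwa [lt_div_iff₀ (by positivity)]
    rw [add_div] at h2
    push_cast; linarith
  · have := price_nonneg D C s
    push_cast; linarith
  · -- The left endpoint of the correct leaf is at most `v`, so this case is void.
    exfalso
    obtain ⟨hd, hk, hn⟩ := h2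
    apply h1
    rw [price_le_iff hv]
    unfold truth
    rw [if_pos hd, if_neg hn, hd, hk]
  · push_cast; linarith

/-- Assume the feedback is corrupted in at most `C` rounds and `C` is
known to the seller.  The meta-algorithm with Commit procedure `CommitKnown` (horizon `T`,
leaves at depth `D = ⌈log₂ T⌉`, valuation `v ∈ [0,1)`) guarantees regret
`R_T ≤ 5·log₂ T + 19·C + 3`; in particular `R_T = O(C + log T)`. -/
theorem commitKnown_regret_bound
    (T C : ℕ) (v : ℝ) (hv : 0 ≤ v) (hv1 : v < 1) (obs : ℕ → Bool)
    (hC : corruptions v (Nat.clog 2 T) C T obs ≤ C) :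
    regret v (Nat.clog 2 T) C T obs
      ≤ 5 * (Nat.clog 2 T : ℝ) + 19 * (C : ℝ) + 3 := by
  set D := Nat.clog 2 T with hD
  have hsum := sum_loss_le hv hv1 D C T obs hC T le_rfl
  have hnn := phi_nonneg (C := C) (pathIdx v) (pathIdx_zero hv1) (inv_traj D C obs T)
  have hZ : ∑ i ∈ Finset.range T, loss (pathIdx v) D C (traj D C obs i) ≤ 3 * D + 8 * C + 1 := by
    omega
  have hR : ∑ i ∈ Finset.range T, (loss (pathIdx v) D C (traj D C obs i) : ℝ) ≤
      3 * D + 8 * C + 1 := by exact_mod_cast hZ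
  have hT : (T : ℝ) * (1 / 2 ^ D) ≤ 1 := by
    rw [mul_one_div, div_le_one (by positivity)]
    exact_mod_cast Nat.le_pow_clog (by norm_num) T
  have hreg : regret v D C T obs ≤
      ∑ i ∈ Finset.range T, ((loss (pathIdx v) D C (traj D C obs i) : ℝ) + 1 / 2 ^ D) := by
    have : regret v D C T obs = ∑ t ∈ Finset.range T,
        (v - priceAt D C obs t * (if priceAt D C obs t ≤ v then 1 else 0)) := by
      simp [regret, Finset.sum_sub_distrib]
    rw [this]
    exact Finset.sum_le_sum fun i _ => round_regret_le hv hv1 D C _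
  rw [Finset.sum_add_distrib] at hreg
  simp only [Finset.sum_const, Finset.card_range, nsmul_eq_mul] at hreg
  have h1 : (0 : ℝ) ≤ D := Nat.cast_nonneg _
  have h2 : (0 : ℝ) ≤ C := Nat.cast_nonneg _
  linarith

end RobustPricing
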